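/- (Universal embedding theorem / Krasner–Kaloujnine.) Let G be a group, N a normal subgroup of G, and K := G/N the quotient group. Then there exists an injective group homomorphism from G into the regular wreath product N ≀ K. (Concretely, choosing for each u ∈ K a representative t_u ∈ G of u, the map Φ(x) = (f_x, p(x)) with f_x(u) = t_u · x · t_{u·p(x)}⁻¹, where p : G → K is the quotient map, is such an embedding.) -/

import Mathlib

/-!
Fix a set-theoretic section `s : G ⧸ N → G` of the quotient map `p` and send `x` to `(f_x, p x)`,
where `f_x u = (s u)⁻¹ * x * s ((p x)⁻¹ * u)`. This lies in `N` because `p` kills it. The cocycle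
identity `f_{xy} u = f_x u * f_y ((p x)⁻¹ * u)` holds because the inner factors
`s ((p x)⁻¹ * u)` and its inverse cancel, so the map is a homomorphism for the action
`(h • f) k = f (h⁻¹ * k)`. It is injective since `x` is recovered from `p x` and `f_x 1`.

In terms of the representatives `t_u = (s u⁻¹)⁻¹`, one has `f_x u⁻¹ = t_u * x * t_{u * p x}⁻¹`, so
this is the usual Krasner–Kaloujnine map, reindexed by inversion to fit the left action used here.
-/

/-- The action of `H` on the group of functions `H → G`, given by
`(h • f) k = f (h⁻¹ * k)`. -/
def wreathMulAut (G H : Type*) [Group G] [Group H] : H →* MulAut (H → G) where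
  toFun h :=
    { toFun := fun f k => f (h⁻¹ * k)
      invFun := fun f k => f (h * k)
      left_inv := fun f => by funext k; simp [← mul_assoc]
      right_inv := fun f => by funext k; simp [← mul_assoc]
      map_mul' := fun f g => rfl }
  map_one' := by
    ext f k
    simp
  map_mul' := fun a b => by
    ext f k
    simp [mul_assoc]

/-- The (regular) wreath product `G ≀ H`, i.e. the semidirect product
`(H → G) ⋊ H` where `H` acts on `H → G` by `(h • f) k = f (h⁻¹ * k)`, with
multiplication `(f, h) * (f', h') = (f * (h • f'), h * h')`. -/
abbrev Wreath (G H : Type*) [Group G] [Group H] :=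
  (H → G) ⋊[wreathMulAut G H] H

/-- **Universal embedding theorem (Krasner–Kaloujnine).**
If `N` is a normal subgroup of a group `G` and `K = G/N`, then `G` embeds into
the regular wreath product `N ≀ K`. -/
theorem universal_embedding_theorem
    {G : Type*} [Group G] (N : Subgroup G) [N.Normal] :
    ∃ Φ : G →* Wreath (↥N) (G ⧸ N), Function.Injective Φ := by
  obtain ⟨s, hs⟩ : ∃ s : G ⧸ N → G, ∀ u, (s u : G ⧸ N) = u :=
    ⟨Quotient.out, fun u => QuotientGroup.out_eq' u⟩
  have hmem : ∀ (x : G) (u : G ⧸ N), (s u)⁻¹ * x * s ((x : G ⧸ N)⁻¹ * u) ∈ N := by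
    intro x u
    rw [← QuotientGroup.eq_one_iff]
    simp [hs, mul_assoc]
  refine ⟨MonoidHom.mk' (fun x => ⟨fun u => ⟨_, hmem x u⟩, (x : G ⧸ N)⟩) ?_, ?_⟩
  · intro x y
    refine SemidirectProduct.ext ?_ rfl
    funext u
    apply Subtype.ext
    change (s u)⁻¹ * (x * y) * s (((x * y : G) : G ⧸ N)⁻¹ * u) =
      ((s u)⁻¹ * x * s ((x : G ⧸ N)⁻¹ * u)) *
        ((s ((x : G ⧸ N)⁻¹ * u))⁻¹ * y * s ((y : G ⧸ N)⁻¹ * ((x : G ⧸ N)⁻¹ * u)))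
    simp [mul_assoc]
  · intro x y h
    have hr : (x : G ⧸ N) = y := congrArg SemidirectProduct.right h
    have hl : (s 1)⁻¹ * x * s ((x : G ⧸ N)⁻¹ * 1) = (s 1)⁻¹ * y * s ((y : G ⧸ N)⁻¹ * 1) :=
      congrArg Subtype.val (congrFun (congrArg SemidirectProduct.left h) 1)
    rw [hr] at hl
    simpa using hl
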